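/- Let 0 ≤ μ ≤ 1 and 0 ≤ η < 1. Set γ1 = √((1+η)(1−μ)/2), γ0 = −(1/2)√((1+η)(1−μ)/2) + √(μ/2 + (1+η)(1−μ)/8), and γ2 = −(1/2)√((1+η)(1−μ)/2) − √(μ/2 + (1+η)(1−μ)/8). Then (γ0, γ1, γ2) is a solution of the system S1(μ,η). -/

import Mathlib

/-- The `k = δ = 1` reduced system `S1(μ,η)` for `(γ0, γ1, γ2)`. -/
def S1 (μ η γ0 γ1 γ2 : ℝ) : Prop :=
  2 * γ0 * γ2 = -μ ∧
  2 * γ0 * γ1 + 2 * γ1 * γ2 = η * μ - η + μ - 1 ∧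
  γ0 ^ 2 + γ1 ^ 2 + γ2 ^ 2 = 1 - η * μ + η

/-! On the plane `γ0 + γ1 + γ2 = 0` the system prescribes only `γ0 * γ2` and `γ1 ^ 2`. Once `γ1` is
chosen, `γ0` and `γ2` are thus the two roots of `t ^ 2 + γ1 * t - μ / 2`, which the quadratic
formula supplies. -/

theorem S1_iff_of_add_add_eq_zero {μ η γ0 γ1 γ2 : ℝ} (hsum : γ0 + γ1 + γ2 = 0) :
    S1 μ η γ0 γ1 γ2 ↔ 2 * γ0 * γ2 = -μ ∧ 2 * γ1 ^ 2 = (1 + η) * (1 - μ) := by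
  have cross_terms : 2 * γ0 * γ1 + 2 * γ1 * γ2 = -(2 * γ1 ^ 2) := by
    linear_combination 2 * γ1 * hsum
  have sum_sq : γ0 ^ 2 + γ1 ^ 2 + γ2 ^ 2 = 2 * γ1 ^ 2 - 2 * γ0 * γ2 := by
    linear_combination (γ0 - γ1 + γ2) * hsum
  rw [S1, cross_terms, sum_sq]
  constructor
  · rintro ⟨hprod, hcross, -⟩
    exact ⟨hprod, by linear_combination -hcross⟩
  · rintro ⟨hprod, hsq⟩
    exact ⟨hprod, by linear_combination -hsq, by linear_combination hsq - hprod⟩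

theorem explicit_solution_S1_general {μ η : ℝ} (hγ1 : 0 ≤ (1 + η) * (1 - μ) / 2)
    (hdisc : 0 ≤ μ / 2 + (1 + η) * (1 - μ) / 8) :
    S1 μ η
      (-(1 / 2) * Real.sqrt ((1 + η) * (1 - μ) / 2)
        + Real.sqrt (μ / 2 + (1 + η) * (1 - μ) / 8))
      (Real.sqrt ((1 + η) * (1 - μ) / 2))
      (-(1 / 2) * Real.sqrt ((1 + η) * (1 - μ) / 2)
        - Real.sqrt (μ / 2 + (1 + η) * (1 - μ) / 8)) := by
  have hγ1_sq := Real.sq_sqrt hγ1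
  have hdisc_sq := Real.sq_sqrt hdisc
  refine (S1_iff_of_add_add_eq_zero (by ring)).2 ⟨?product, ?square⟩
  case product => linear_combination (1 / 2) * hγ1_sq - 2 * hdisc_sq
  case square => linear_combination 2 * hγ1_sq

/-- **Explicit solution of the `k = δ = 1` reduced system.**
For `0 ≤ μ ≤ 1` and `0 ≤ η < 1`, the explicitly given `(γ0, γ1, γ2)` solves `S1(μ,η)`. -/
theorem explicit_solution_S1 (μ η : ℝ) (hμ0 : 0 ≤ μ) (hμ1 : μ ≤ 1)
    (hη0 : 0 ≤ η) (hη1 : η < 1) :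
    S1 μ η
      (-(1 / 2) * Real.sqrt ((1 + η) * (1 - μ) / 2)
        + Real.sqrt (μ / 2 + (1 + η) * (1 - μ) / 8))
      (Real.sqrt ((1 + η) * (1 - μ) / 2))
      (-(1 / 2) * Real.sqrt ((1 + η) * (1 - μ) / 2)
        - Real.sqrt (μ / 2 + (1 + η) * (1 - μ) / 8)) := by
  have hprod : 0 ≤ (1 + η) * (1 - μ) := mul_nonneg (by linarith) (by linarith)
  exact explicit_solution_S1_general (by linarith) (by linarith)
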